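/- Static policy achieves constant expected gap (Theorem 1): Consider the static policy π^s for horizon T, which sets ω(t) = 1 if and only if t ≥ T − a_s·√(T·log T), where a_s = 2√6·N(N−1)/q. Then there exists a constant C, depending only on N and q, such that E[Gap^s(T)] ≤ C for every horizon T. -/

import Mathlib

/-!
The proof uses the exponential potential `expPot α x = ∑ i, exp (α (x i - mean load))`.

When every flex ball is flexed, a ball sent to the less loaded of two random bins lands, in
expectation of `u i = exp (α (x i - mean))`, below the average of `u`: already the pairs that
contain the globally least loaded bin `m` lower the expectation by
`δ (∑ u - N u m)`, where `δ = q / (N (N - 1))` (`sum_arrival_true_le`), and `u m ≤ 1`. With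
`α = δ N / 2` this gives the drift inequality
`E[expPot α] ≤ exp (-α δ / 2) * expPot α + 2` per step (`stepOp_true_expPot_le`), hence geometric
contraction up to a constant over the flexing phase. Without flexing, `expPot lam` grows at most by
`exp (lam ^ 2)` per step for every `lam ∈ [0, 1]` (`stepOp_false_expPot_le`).

Let `r = √(T log T)` and let `s` be the number of steps before flexing starts; if `s > 0`, at
least `a_s r = 2 √6 r / δ` steps are flexed, so the contraction factor over the flexing phase is at
most `exp (-α √6 r)`. If the gap at time `s` is at most `√6 r`, the potential at time `s` is at
most `N exp (α √6 r)`, the contraction absorbs it, and the final expected gap is bounded by a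
constant, because `gap ≤ expPot α / α`. If the gap at time `s` exceeds `√6 r`, the final gap is
bounded by `T ≤ T exp (-lam √6 r) expPot lam`; with the Chernoff parameter `lam = √(log T / T)` the
expectation of the right-hand side is at most `N T ^ (2 - √6) ≤ N`. The two cases together bound
the conditional expectation of the final gap pointwise in the loads at time `s`, and averaging
over these loads gives the theorem.
-/


attribute [local instance] Classical.propDecidable

/-- An arrival type: (is-flex-ball, preferred bin, flex set). -/
abbrev Arrival (N : ℕ) := Bool × Fin N × Finset (Fin N)

/-- Mass of a single arrival: `f ~ Bernoulli(q)`, `p` uniform on `Fin N`,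
`F` uniform on the 2-element subsets of `Fin N`, mutually independent. -/
noncomputable def arrivalProb (N : ℕ) (q : ℝ) (a : Arrival N) : ℝ :=
  (if a.1 then q else 1 - q) * (1 / (N : ℝ)) *
    (if a.2.2.card = 2 then 1 / (N.choose 2 : ℝ) else 0)

/-- Mass of a sequence of `T` i.i.d. arrivals. -/
noncomputable def seqMass (N T : ℕ) (q : ℝ) (xs : Fin T → Arrival N) : ℝ :=
  ∏ t, arrivalProb N q (xs t)

/-- Expectation of a real random variable on the canonical space of `T` arrivals. -/
noncomputable def expec (N T : ℕ) (q : ℝ) (X : (Fin T → Arrival N) → ℝ) : ℝ :=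
  ∑ xs : Fin T → Arrival N, seqMass N T q xs * X xs

/-- Probability of an event on the canonical space of `T` arrivals. -/
noncomputable def prob (N T : ℕ) (q : ℝ) (A : (Fin T → Arrival N) → Prop) : ℝ :=
  ∑ xs : Fin T → Arrival N, if A xs then seqMass N T q xs else 0

/-- The least-loaded bin in `F` (ties broken in favor of the smallest index). -/
noncomputable def argminBin {N : ℕ} [NeZero N] (x : Fin N → ℕ) (F : Finset (Fin N)) : Fin N :=
  if hF : (F.filter fun i => ∀ j ∈ F, x i ≤ x j).Nonempty
  then (F.filter fun i => ∀ j ∈ F, x i ≤ x j).min' hF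
  else 0

/-- One step of the greedy (least-loaded) allocation: if the ball is a flex ball and
flexing is exerted, it goes to the least-loaded bin of its flex set (lexicographic
tie-breaking); otherwise it goes to its preferred bin. -/
noncomputable def greedyStep {N : ℕ} [NeZero N] (flex : Bool) (a : Arrival N)
    (x : Fin N → ℕ) : Fin N → ℕ :=
  fun i => if i = (if a.1 && flex then argminBin x a.2.2 else a.2.1) then x i + 1 else x i

/-- Load process under a flexing rule `dec` (which may depend on the whole realization,
the time, and the current loads), with greedy placement of flexed flex balls. -/
noncomputable def greedyLoads {N T : ℕ} [NeZero N]
    (dec : (Fin T → Arrival N) → ℕ → (Fin N → ℕ) → Bool)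
    (xs : Fin T → Arrival N) : ℕ → Fin N → ℕ
  | 0 => fun _ => 0
  | t + 1 =>
    if h : t < T then
      greedyStep (dec xs t (greedyLoads dec xs t)) (xs ⟨t, h⟩) (greedyLoads dec xs t)
    else greedyLoads dec xs t

/-- The maximum load over all bins. -/
noncomputable def maxLoad {N : ℕ} (x : Fin N → ℕ) : ℕ := Finset.univ.sup x

/-- `Gap(t)` : maximum load minus the average load `t/N`. -/
noncomputable def gap {N : ℕ} (x : Fin N → ℕ) (t : ℕ) : ℝ :=
  (maxLoad x : ℝ) - (t : ℝ) / (N : ℝ)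

/-- Number of flexed balls `M = ∑_t f_t ω(t)`. -/
noncomputable def numFlexed {N T : ℕ} [NeZero N]
    (dec : (Fin T → Arrival N) → ℕ → (Fin N → ℕ) → Bool) (xs : Fin T → Arrival N) : ℕ :=
  ∑ t : Fin T, if (xs t).1 && dec xs (t : ℕ) (greedyLoads dec xs (t : ℕ)) then 1 else 0

/-- Flexing rule of a "static"-type policy: flex exactly from period
`T - c·√(T log T)` on (ball `t` corresponds to step index `t-1`). -/
noncomputable def lateDec (N T : ℕ) (c : ℝ) :
    (Fin T → Arrival N) → ℕ → (Fin N → ℕ) → Bool :=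
  fun _ s _ =>
    if (T : ℝ) - c * Real.sqrt ((T : ℝ) * Real.log (T : ℝ)) ≤ ((s : ℝ) + 1) then true else false

/-- Flexing rule of the dynamic policy: flex at period `t = s+1` iff the current gap
`Gap(t-1)` is at least `a_d (T - t) q / N` with `a_d = 1/(5 C(N,2))`. -/
noncomputable def dynDec (N T : ℕ) (q : ℝ) :
    (Fin T → Arrival N) → ℕ → (Fin N → ℕ) → Bool :=
  fun _ s x =>
    if (1 / (5 * (N.choose 2 : ℝ))) * ((T : ℝ) - ((s : ℝ) + 1)) * q / (N : ℝ) ≤ gap x s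
    then true else false

/-- First time (within horizon `T`) at which the maximum load equals `S`. -/
noncomputable def hitTime {N : ℕ} (T S : ℕ) (x : ℕ → Fin N → ℕ) : ℕ :=
  if h : ((Finset.range (T + 1)).filter fun t => maxLoad (x t) = S).Nonempty
  then ((Finset.range (T + 1)).filter fun t => maxLoad (x t) = S).min' h
  else T

/-- The dynamic opaque policy: the flag records whether the trigger condition
`Gap(t) ≥ c_d (T-t) q / N` (with `c_d = 1/(10 C(N,2))`) has held at some time `≤ t`;
from then on every flex ball is flexed (greedy placement). Returns (flag, loads). -/
noncomputable def dynOpaque (N T : ℕ) [NeZero N] (q : ℝ) (xs : Fin T → Arrival N) :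
    ℕ → Bool × (Fin N → ℕ)
  | 0 =>
    (if (1 / (10 * (N.choose 2 : ℝ))) * (T : ℝ) * q / (N : ℝ) ≤ 0 then true else false,
      fun _ => 0)
  | t + 1 =>
    let p := dynOpaque N T q xs t
    let x' := if h : t < T then greedyStep p.1 (xs ⟨t, h⟩) p.2 else p.2
    (p.1 ||
      (if (1 / (10 * (N.choose 2 : ℝ))) * ((T : ℝ) - ((t : ℝ) + 1)) * q / (N : ℝ) ≤
          gap x' (t + 1)
       then true else false),
     x')

/-- Number of flexed balls `D = ∑_{t=1}^{R} f_t ω(t)` during one replenishment cycle,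
for a policy given by the flexing rule `dec`. -/
noncomputable def cycleFlexCount (N T : ℕ) [NeZero N]
    (dec : (Fin T → Arrival N) → ℕ → (Fin N → ℕ) → Bool) (S : ℕ)
    (xs : Fin T → Arrival N) : ℕ :=
  ∑ t ∈ Finset.range (hitTime T S (greedyLoads dec xs)),
    if h : t < T then (if (xs ⟨t, h⟩).1 && dec xs t (greedyLoads dec xs t) then 1 else 0)
    else 0

/-- Number of flexed balls during one replenishment cycle of the dynamic opaque policy. -/
noncomputable def dynFlexCount (N T : ℕ) [NeZero N] (q : ℝ) (S : ℕ)
    (xs : Fin T → Arrival N) : ℕ :=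
  ∑ t ∈ Finset.range (hitTime T S fun u => (dynOpaque N T q xs u).2),
    if h : t < T then (if (xs ⟨t, h⟩).1 && (dynOpaque N T q xs t).1 then 1 else 0) else 0

/-! ### One-step operator -/

/-- The bin receiving the arrival `a` when the loads are `x`. -/
noncomputable def chosenBin {N : ℕ} [NeZero N] (flex : Bool) (a : Arrival N)
    (x : Fin N → ℕ) : Fin N :=
  if a.1 && flex then argminBin x a.2.2 else a.2.1

/-- Transition operator of the load chain:
`(stepOp q flex g) x` is the expectation of `g` after one step from `x`. -/
noncomputable def stepOp {N : ℕ} [NeZero N] (q : ℝ) (flex : Bool) (g : (Fin N → ℕ) → ℝ)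
    (x : Fin N → ℕ) : ℝ :=
  ∑ a : Arrival N, arrivalProb N q a * g (greedyStep flex a x)

lemma arrivalProb_nonneg {N : ℕ} {q : ℝ} (hq0 : 0 < q) (hq1 : q ≤ 1) (a : Arrival N) :
    0 ≤ arrivalProb N q a := by
  unfold arrivalProb
  have : 0 ≤ 1 - q := by linarith
  refine mul_nonneg (mul_nonneg ?_ (by positivity)) ?_
  · split_ifs <;> linarith
  · split_ifs <;> positivity

lemma choose_two_pos {N : ℕ} (hN : 2 ≤ N) : (0 : ℝ) < (N.choose 2 : ℝ) := by
  exact_mod_cast Nat.choose_pos hN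

lemma sum_flexSet {N : ℕ} (v : Finset (Fin N) → ℝ) :
    ∑ F : Finset (Fin N), (if F.card = 2 then 1 / (N.choose 2 : ℝ) else 0) * v F
      = 1 / (N.choose 2 : ℝ) * ∑ F ∈ Finset.powersetCard 2 Finset.univ, v F := by
  have : Finset.powersetCard 2 (Finset.univ : Finset (Fin N))
      = Finset.univ.filter (fun F => F.card = 2) := by
    ext F; simp [Finset.mem_powersetCard]
  rw [this, Finset.sum_filter, Finset.mul_sum]
  refine Finset.sum_congr rfl fun F _ => ?_
  split_ifs <;> simp

lemma sum_flexSet_one {N : ℕ} (hN : 2 ≤ N) :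
    ∑ F : Finset (Fin N), (if F.card = 2 then 1 / (N.choose 2 : ℝ) else 0) = 1 := by
  have h := sum_flexSet (N := N) (fun _ => 1)
  simp only [mul_one] at h
  rw [h]
  have := choose_two_pos hN
  simp [Finset.card_powersetCard]
  field_simp

lemma sum_arrival_false {N : ℕ} [NeZero N] (hN : 2 ≤ N) (q : ℝ) (u : Fin N → ℝ)
    (x : Fin N → ℕ) :
    ∑ a : Arrival N, arrivalProb N q a * u (chosenBin false a x) = (∑ i, u i) / N := by
  have h1 : ∀ (b : Bool) (p : Fin N),
      ∑ F : Finset (Fin N), arrivalProb N q (b, p, F) * u (chosenBin false (b, p, F) x)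
        = (if b then q else 1 - q) * (1 / (N : ℝ)) * u p := by
    intro b p
    have h2 : ∀ F : Finset (Fin N),
        arrivalProb N q (b, p, F) * u (chosenBin false (b, p, F) x)
          = (if b then q else 1 - q) * (1 / (N : ℝ)) * u p *
            (if F.card = 2 then 1 / (N.choose 2 : ℝ) else 0) := by
      intro F
      simp only [arrivalProb, chosenBin, Bool.and_false, Bool.false_eq_true, if_false]
      ring
    simp_rw [h2]
    rw [← Finset.mul_sum, sum_flexSet_one hN, mul_one]
  rw [Fintype.sum_prod_type]
  simp_rw [Fintype.sum_prod_type, h1, ← Finset.mul_sum]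
  simp
  ring

lemma sum_arrival_true {N : ℕ} [NeZero N] (hN : 2 ≤ N) (q : ℝ) (u : Fin N → ℝ)
    (x : Fin N → ℕ) :
    ∑ a : Arrival N, arrivalProb N q a * u (chosenBin true a x)
      = (1 - q) * ((∑ i, u i) / N) + q * (1 / (N.choose 2 : ℝ) *
          ∑ F ∈ Finset.powersetCard 2 Finset.univ, u (argminBin x F)) := by
  have hN0 : (N : ℝ) ≠ 0 := by positivity
  have h1 : ∀ (p : Fin N),
      ∑ F : Finset (Fin N), arrivalProb N q (false, p, F) * u (chosenBin true (false, p, F) x)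
        = (1 - q) * (1 / (N : ℝ)) * u p := by
    intro p
    simp only [arrivalProb, chosenBin, Bool.false_and, Bool.false_eq_true, if_false]
    rw [← Finset.sum_mul, ← Finset.mul_sum, sum_flexSet_one hN]
    ring
  have h2 : ∀ (p : Fin N),
      ∑ F : Finset (Fin N), arrivalProb N q (true, p, F) * u (chosenBin true (true, p, F) x)
        = q * (1 / (N : ℝ)) * (1 / (N.choose 2 : ℝ) *
          ∑ F ∈ Finset.powersetCard 2 Finset.univ, u (argminBin x F)) := by
    intro p
    rw [← sum_flexSet (fun F => u (argminBin x F)), Finset.mul_sum]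
    refine Finset.sum_congr rfl fun F _ => ?_
    simp only [arrivalProb, chosenBin, Bool.and_self, if_true]
    ring
  rw [Fintype.sum_prod_type]
  simp_rw [Fintype.sum_prod_type]
  rw [Fintype.sum_bool]
  simp_rw [h1, h2, ← Finset.mul_sum]
  simp
  field_simp
  ring

lemma sum_arrivalProb {N : ℕ} [NeZero N] (hN : 2 ≤ N) (q : ℝ) :
    ∑ a : Arrival N, arrivalProb N q a = 1 := by
  have h := sum_arrival_false hN q (fun _ => 1) (fun _ => 0)
  have hN0 : (N : ℝ) ≠ 0 := by positivity
  simpa [hN0] using h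

lemma stepOp_mono {N : ℕ} [NeZero N] {q : ℝ} (hq0 : 0 < q) (hq1 : q ≤ 1) (flex : Bool)
    {g g' : (Fin N → ℕ) → ℝ} (h : ∀ x, g x ≤ g' x) (x : Fin N → ℕ) :
    stepOp q flex g x ≤ stepOp q flex g' x :=
  Finset.sum_le_sum fun a _ => mul_le_mul_of_nonneg_left (h _) (arrivalProb_nonneg hq0 hq1 a)

lemma stepOp_affine {N : ℕ} [NeZero N] (hN : 2 ≤ N) (q : ℝ) (flex : Bool)
    (g : (Fin N → ℕ) → ℝ) (c d : ℝ) (x : Fin N → ℕ) :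
    stepOp q flex (fun y => c * g y + d) x = c * stepOp q flex g x + d := by
  unfold stepOp
  simp_rw [mul_add, Finset.sum_add_distrib, ← Finset.sum_mul, sum_arrivalProb hN, Finset.mul_sum]
  rw [one_mul]
  congr 1
  refine Finset.sum_congr rfl fun a _ => by ring

lemma stepOp_iterate_mono {N : ℕ} [NeZero N] {q : ℝ} (hq0 : 0 < q) (hq1 : q ≤ 1) (flex : Bool)
    {g g' : (Fin N → ℕ) → ℝ} (h : ∀ x, g x ≤ g' x) (m : ℕ) (x : Fin N → ℕ) :
    (stepOp q flex)^[m] g x ≤ (stepOp q flex)^[m] g' x := by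
  induction m generalizing x with
  | zero => exact h x
  | succ m ih =>
    rw [Function.iterate_succ_apply', Function.iterate_succ_apply']
    exact stepOp_mono hq0 hq1 flex ih x

/-! ### Greedy placement over a random pair -/

lemma argminBin_spec {N : ℕ} [NeZero N] (x : Fin N → ℕ) {F : Finset (Fin N)}
    (hF : F.Nonempty) : argminBin x F ∈ F ∧ ∀ j ∈ F, x (argminBin x F) ≤ x j := by
  have hne : (F.filter fun i => ∀ j ∈ F, x i ≤ x j).Nonempty := by
    obtain ⟨i, hi, hmin⟩ := F.exists_min_image x hF
    exact ⟨i, Finset.mem_filter.2 ⟨hi, hmin⟩⟩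
  have := Finset.min'_mem _ hne
  rw [Finset.mem_filter] at this
  unfold argminBin
  rw [dif_pos hne]
  exact this

lemma card_pairs_mem_le {N : ℕ} (i : Fin N) :
    ((Finset.powersetCard 2 (Finset.univ : Finset (Fin N))).filter (fun F => i ∈ F)).card
      ≤ N - 1 := by
  have hsub : (Finset.powersetCard 2 (Finset.univ : Finset (Fin N))).filter (fun F => i ∈ F)
      ⊆ (Finset.univ.erase i).image (fun j => ({i, j} : Finset (Fin N))) := by
    intro F hF
    simp only [Finset.mem_filter, Finset.mem_powersetCard] at hF
    obtain ⟨⟨-, hc⟩, hi⟩ := hF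
    obtain ⟨a, b, hab, rfl⟩ := Finset.card_eq_two.1 hc
    simp only [Finset.mem_insert, Finset.mem_singleton] at hi
    rw [Finset.mem_image]
    rcases hi with rfl | rfl
    · exact ⟨b, by simp [hab.symm], rfl⟩
    · exact ⟨a, by simp [hab], Finset.pair_comm _ _⟩
  refine (Finset.card_le_card hsub).trans (Finset.card_image_le.trans ?_)
  simp [Finset.card_erase_of_mem]

/-- Summed over all pairs, the smaller of the two values falls short of their mean by at least
half of `∑ i, (u i - u m)`: this is contributed by the pairs that contain the overall minimizer
`m`. -/
lemma sum_pairs_le {N : ℕ} [NeZero N] (hN : 2 ≤ N) (x : Fin N → ℕ) (u : Fin N → ℝ)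
    (hu : ∀ i j, x i ≤ x j → u i ≤ u j) (hu0 : ∀ i, 0 ≤ u i) (m : Fin N)
    (hm : ∀ i, x m ≤ x i) :
    ∑ F ∈ Finset.powersetCard 2 Finset.univ, u (argminBin x F)
      ≤ (((N : ℝ) - 1) * ∑ i, u i - ((∑ i, u i) - N * u m)) / 2 := by
  set P := Finset.powersetCard 2 (Finset.univ : Finset (Fin N)) with hP
  have hpt : ∀ F ∈ P, u (argminBin x F) ≤
      ((∑ i, if i ∈ F then u i else 0)
        - ∑ i, if i ∈ F ∧ m ∈ F then u i - u m else 0) / 2 := by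
    intro F hF
    have hc : F.card = 2 := (Finset.mem_powersetCard.1 hF).2
    have hne : F.Nonempty := Finset.card_pos.1 (by omega)
    obtain ⟨hmem, hmin⟩ := argminBin_spec x hne
    have hle : ∀ j ∈ F, u (argminBin x F) ≤ u j := fun j hj => hu _ _ (hmin j hj)
    have hs : (∑ i, if i ∈ F then u i else 0) = ∑ i ∈ F, u i := by
      rw [← Finset.sum_filter]; congr 1; ext i; simp
    by_cases hmF : m ∈ F
    · have hs2 : (∑ i, if i ∈ F ∧ m ∈ F then u i - u m else 0) = ∑ i ∈ F, (u i - u m) := by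
        rw [← Finset.sum_filter]; congr 1; ext i; simp [hmF]
      rw [hs, hs2, Finset.sum_sub_distrib]
      have := hle m hmF
      simp [hc]
      linarith
    · simp only [hmF, and_false, if_false, Finset.sum_const_zero, sub_zero]
      rw [hs]
      have : ∑ i ∈ F, u (argminBin x F) ≤ ∑ i ∈ F, u i := Finset.sum_le_sum hle
      simp [hc] at this
      linarith
  have h1 : ∑ F ∈ P, (∑ i, if i ∈ F then u i else 0) ≤ ((N : ℝ) - 1) * ∑ i, u i := by
    rw [Finset.sum_comm, Finset.mul_sum]
    refine Finset.sum_le_sum fun i _ => ?_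
    rw [← Finset.sum_filter, Finset.sum_const, nsmul_eq_mul]
    refine mul_le_mul_of_nonneg_right ?_ (hu0 i)
    have h := card_pairs_mem_le i
    have h' : ((P.filter (fun F => i ∈ F)).card : ℝ) ≤ ((N - 1 : ℕ) : ℝ) := by exact_mod_cast h
    rwa [Nat.cast_sub (by omega), Nat.cast_one] at h'
  have h2 : (∑ i, u i) - N * u m
      ≤ ∑ F ∈ P, ∑ i, if i ∈ F ∧ m ∈ F then u i - u m else 0 := by
    have : (∑ i, u i) - N * u m = ∑ i, (u i - u m) := by
      rw [Finset.sum_sub_distrib]; simp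
    rw [Finset.sum_comm, this]
    refine Finset.sum_le_sum fun i _ => ?_
    have hnn : ∀ F ∈ P, 0 ≤ (if i ∈ F ∧ m ∈ F then u i - u m else 0) := by
      intro F _
      split_ifs
      · linarith [hu m i (hm i)]
      · exact le_rfl
    by_cases him : i = m
    · subst him
      simp
    · have hmem : ({i, m} : Finset (Fin N)) ∈ P :=
        Finset.mem_powersetCard.2 ⟨Finset.subset_univ _, Finset.card_pair him⟩
      have := Finset.single_le_sum hnn hmem
      simpa using this
  calc _ ≤ ∑ F ∈ P, ((∑ i, if i ∈ F then u i else 0)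
        - ∑ i, if i ∈ F ∧ m ∈ F then u i - u m else 0) / 2 := Finset.sum_le_sum hpt
    _ ≤ _ := by
      rw [← Finset.sum_div, Finset.sum_sub_distrib]
      linarith

/-- When every flex ball is flexed, the expected value of `u` at the receiving bin is the average
of `u` minus a restoring term. -/
lemma sum_arrival_true_le {N : ℕ} [NeZero N] (hN : 2 ≤ N) {q : ℝ} (hq0 : 0 < q)
    (x : Fin N → ℕ) (u : Fin N → ℝ)
    (hu : ∀ i j, x i ≤ x j → u i ≤ u j) (hu0 : ∀ i, 0 ≤ u i) (m : Fin N)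
    (hm : ∀ i, x m ≤ x i) :
    ∑ a : Arrival N, arrivalProb N q a * u (chosenBin true a x)
      ≤ (∑ i, u i) / N - q / (N * ((N : ℝ) - 1)) * ((∑ i, u i) - N * u m) := by
  rw [sum_arrival_true hN]
  have h := sum_pairs_le hN x u hu hu0 m hm
  have hN2 : (2 : ℝ) ≤ N := by exact_mod_cast hN
  have hN1 : 0 < (N : ℝ) - 1 := by linarith
  have hC : (N.choose 2 : ℝ) = N * ((N : ℝ) - 1) / 2 := Nat.cast_choose_two ℝ N
  have hCp := choose_two_pos hN
  calc _ ≤ (1 - q) * ((∑ i, u i) / N) + q * (1 / (N.choose 2 : ℝ) *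
        ((((N : ℝ) - 1) * ∑ i, u i - ((∑ i, u i) - N * u m)) / 2)) := by gcongr
    _ = _ := by
      rw [hC]
      field_simp
      ring

/-! ### The exponential potential -/

/-- Total load. -/
def totalLoad {N : ℕ} (x : Fin N → ℕ) : ℕ := ∑ i, x i

/-- Deviation of bin `i` from the average load. -/
noncomputable def dev {N : ℕ} (x : Fin N → ℕ) (i : Fin N) : ℝ :=
  (x i : ℝ) - (totalLoad x : ℝ) / N

/-- The potential `∑ i, exp (α (x i - average load))`. -/
noncomputable def expPot {N : ℕ} (α : ℝ) (x : Fin N → ℕ) : ℝ :=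
  ∑ i, Real.exp (α * dev x i)

lemma greedyStep_eq {N : ℕ} [NeZero N] (flex : Bool) (a : Arrival N) (x : Fin N → ℕ)
    (i : Fin N) :
    greedyStep flex a x i = x i + if i = chosenBin flex a x then 1 else 0 := by
  unfold greedyStep chosenBin
  by_cases h : i = (if (a.1 && flex) = true then argminBin x a.2.2 else a.2.1)
  · rw [if_pos h, if_pos h]
  · rw [if_neg h, if_neg h, add_zero]

lemma totalLoad_greedyStep {N : ℕ} [NeZero N] (flex : Bool) (a : Arrival N) (x : Fin N → ℕ) :
    totalLoad (greedyStep flex a x) = totalLoad x + 1 := by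
  unfold totalLoad
  simp_rw [greedyStep_eq, Finset.sum_add_distrib]
  simp

lemma expPot_greedyStep {N : ℕ} [NeZero N] (α : ℝ) (flex : Bool) (a : Arrival N)
    (x : Fin N → ℕ) :
    expPot α (greedyStep flex a x) = Real.exp (-α / N) *
      (expPot α x + (Real.exp α - 1) * Real.exp (α * dev x (chosenBin flex a x))) := by
  set j := chosenBin flex a x with hj
  have hi : ∀ i, Real.exp (α * dev (greedyStep flex a x) i) = Real.exp (-α / N) *
      (Real.exp (α * dev x i) +
        if i = j then (Real.exp α - 1) * Real.exp (α * dev x j) else 0) := by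
    intro i
    have hd : α * dev (greedyStep flex a x) i
        = -α / N + (α * dev x i + if i = j then α else 0) := by
      unfold dev
      rw [totalLoad_greedyStep, greedyStep_eq]
      by_cases h : i = j
      · simp [← hj, h]; ring
      · simp [← hj, h]; ring
    rw [hd, Real.exp_add]
    by_cases h : i = j
    · simp [h, Real.exp_add]; ring
    · simp [h]
  unfold expPot
  simp_rw [hi, ← Finset.mul_sum, Finset.sum_add_distrib]
  simp

lemma stepOp_expPot {N : ℕ} [NeZero N] (hN : 2 ≤ N) (q α : ℝ) (flex : Bool)
    (x : Fin N → ℕ) :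
    stepOp q flex (expPot α) x = Real.exp (-α / N) * (expPot α x + (Real.exp α - 1) *
      ∑ a : Arrival N, arrivalProb N q a * Real.exp (α * dev x (chosenBin flex a x))) := by
  unfold stepOp
  simp_rw [expPot_greedyStep]
  have : ∀ a : Arrival N, arrivalProb N q a * (Real.exp (-α / N) *
      (expPot α x + (Real.exp α - 1) * Real.exp (α * dev x (chosenBin flex a x))))
      = Real.exp (-α / N) * (expPot α x * arrivalProb N q a + (Real.exp α - 1) *
        (arrivalProb N q a * Real.exp (α * dev x (chosenBin flex a x)))) := fun a => by ring
  simp_rw [this, ← Finset.mul_sum, Finset.sum_add_distrib, ← Finset.mul_sum,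
    sum_arrivalProb hN, mul_one]

lemma expPot_nonneg {N : ℕ} (α : ℝ) (x : Fin N → ℕ) : 0 ≤ expPot α x :=
  Finset.sum_nonneg fun _ _ => (Real.exp_pos _).le

lemma exp_sub_one_le {α : ℝ} (h0 : 0 ≤ α) (h1 : α ≤ 1) : Real.exp α - 1 ≤ α + α ^ 2 := by
  have := Real.abs_exp_sub_one_sub_id_le (x := α) (by rw [abs_of_nonneg h0]; exact h1)
  have := (abs_le.1 this).2
  linarith

/-- Without flexing the potential grows by a factor at most `exp (α ^ 2)` per step. -/
lemma stepOp_false_expPot_le {N : ℕ} [NeZero N] (hN : 2 ≤ N) (q : ℝ) {α : ℝ} (h0 : 0 ≤ α)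
    (h1 : α ≤ 1) (x : Fin N → ℕ) :
    stepOp q false (expPot α) x ≤ Real.exp (α ^ 2) * expPot α x := by
  have hN1 : (1 : ℝ) ≤ N := by exact_mod_cast (by omega : 1 ≤ N)
  rw [stepOp_expPot hN, sum_arrival_false hN q (fun i => Real.exp (α * dev x i))]
  change Real.exp (-α / N) * (expPot α x + (Real.exp α - 1) * (expPot α x / N)) ≤ _
  have e : Real.exp (-α / N) * (expPot α x + (Real.exp α - 1) * (expPot α x / N))
      = Real.exp (-α / N) * ((Real.exp α - 1) / N + 1) * expPot α x := by ring
  rw [e]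
  refine mul_le_mul_of_nonneg_right ?_ (expPot_nonneg α x)
  calc _ ≤ Real.exp (-α / N) * Real.exp ((Real.exp α - 1) / N) := by
        gcongr; exact Real.add_one_le_exp _
    _ = Real.exp ((Real.exp α - 1 - α) / N) := by rw [← Real.exp_add]; congr 1; ring
    _ ≤ _ := by
      apply Real.exp_le_exp.2
      rw [div_le_iff₀ (by linarith)]
      nlinarith [exp_sub_one_le h0 h1, sq_nonneg α]

lemma exists_min_dev {N : ℕ} [NeZero N] (x : Fin N → ℕ) :
    ∃ m, (∀ i, x m ≤ x i) ∧ dev x m ≤ 0 := by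
  obtain ⟨m, -, hm⟩ := Finset.univ.exists_min_image x Finset.univ_nonempty
  refine ⟨m, fun i => hm i (Finset.mem_univ i), ?_⟩
  have hN : (0 : ℝ) < N := by exact_mod_cast NeZero.pos N
  have : ∑ _i : Fin N, x m ≤ totalLoad x := Finset.sum_le_sum hm
  simp at this
  have h' : (N : ℝ) * x m ≤ totalLoad x := by exact_mod_cast this
  unfold dev
  rw [sub_nonpos, le_div_iff₀ hN]
  linarith

/-- Under full flexing the potential contracts, up to an additive constant. The choice
`α = δ N / 2` makes the second-order term `α ^ 2 / N` half of the first-order gain `α δ`. -/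
lemma stepOp_true_expPot_le {N : ℕ} [NeZero N] (hN : 2 ≤ N) {q : ℝ} (hq0 : 0 < q)
    (hq1 : q ≤ 1) {δ α : ℝ} (hδ : δ = q / (N * ((N : ℝ) - 1))) (hα : α = δ * N / 2)
    (x : Fin N → ℕ) :
    stepOp q true (expPot α) x ≤ Real.exp (-(α * δ / 2)) * expPot α x + 2 := by
  have hN2 : (2 : ℝ) ≤ N := by exact_mod_cast hN
  have hN1 : 0 < (N : ℝ) - 1 := by linarith
  have hNp : (0 : ℝ) < N := by linarith
  have hδ0 : 0 < δ := by rw [hδ]; positivity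
  have hα0 : 0 < α := by rw [hα]; positivity
  have hδN : δ * N ≤ 1 := by
    rw [hδ, div_mul_eq_mul_div, div_le_one (by positivity)]
    nlinarith
  have hα1 : α ≤ 1 := by rw [hα]; linarith
  have hδN' : δ ≤ 1 / N := by rwa [le_div_iff₀ hNp]
  obtain ⟨m, hm, hdm⟩ := exists_min_dev x
  have hle := sum_arrival_true_le hN hq0 x (fun i => Real.exp (α * dev x i))
    (fun i j hij => by
      apply Real.exp_le_exp.2
      apply mul_le_mul_of_nonneg_left _ hα0.le
      unfold dev
      have : (x i : ℝ) ≤ x j := by exact_mod_cast hij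
      linarith)
    (fun i => (Real.exp_pos _).le) m hm
  rw [← hδ] at hle
  change _ ≤ expPot α x / N - δ * (expPot α x - N * Real.exp (α * dev x m)) at hle
  have hem : Real.exp (α * dev x m) ≤ 1 := by
    rw [Real.exp_le_one_iff]; nlinarith
  set W := expPot α x with hW
  have hW0 : 0 ≤ W := expPot_nonneg α x
  set β := Real.exp α - 1 with hβ
  have hβ0 : 0 ≤ β := by have := Real.add_one_le_exp α; linarith
  have hβ2 : β ≤ α + α ^ 2 := exp_sub_one_le hα0.le hα1
  have hβ3 : β ≤ 2 := by nlinarith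
  rw [stepOp_expPot hN]
  have hle2 : ∑ a : Arrival N, arrivalProb N q a * Real.exp (α * dev x (chosenBin true a x))
      ≤ (1 / N - δ) * W + 1 := by
    have : δ * (N * Real.exp (α * dev x m)) ≤ 1 := by nlinarith [Real.exp_pos (α * dev x m)]
    calc _ ≤ _ := hle
      _ = (1 / N - δ) * W + δ * (N * Real.exp (α * dev x m)) := by ring
      _ ≤ _ := by linarith
  calc _ ≤ Real.exp (-α / N) * (W + β * ((1 / N - δ) * W + 1)) := by gcongr
    _ = Real.exp (-α / N) * (β * (1 / N - δ) + 1) * W + Real.exp (-α / N) * β := by ring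
    _ ≤ Real.exp (-(α * δ / 2)) * W + 2 := by
      apply add_le_add
      · apply mul_le_mul_of_nonneg_right _ hW0
        calc _ ≤ Real.exp (-α / N) * Real.exp (β * (1 / N - δ)) := by
              gcongr; exact Real.add_one_le_exp _
          _ = Real.exp (-α / N + β * (1 / N - δ)) := by rw [Real.exp_add]
          _ ≤ _ := by
            apply Real.exp_le_exp.2
            have h3 : β * (1 / N - δ) ≤ (α + α ^ 2) * (1 / N - δ) :=
              mul_le_mul_of_nonneg_right hβ2 (by linarith)
            have h4 : α ^ 2 / N = α * δ / 2 := by rw [hα]; field_simp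
            have h5 : 0 ≤ α ^ 2 * δ := by positivity
            have h6 : -α / N + (α + α ^ 2) * (1 / N - δ)
                = -(α * δ) + α ^ 2 / N - α ^ 2 * δ := by field_simp; ring
            linarith
      · have : Real.exp (-α / N) ≤ 1 := by
          rw [Real.exp_le_one_iff, neg_div]
          have : 0 ≤ α / N := by positivity
          linarith
        nlinarith [Real.exp_pos (-α / N)]

lemma iterate_expPot_le {N : ℕ} [NeZero N] (hN : 2 ≤ N) {q : ℝ} (hq0 : 0 < q)
    (hq1 : q ≤ 1) {α ρ : ℝ} (hρ0 : 0 < ρ) (hρ1 : ρ < 1)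
    (h : ∀ x : Fin N → ℕ, stepOp q true (expPot α) x ≤ ρ * expPot α x + 2) (m : ℕ)
    (x : Fin N → ℕ) :
    (stepOp q true)^[m] (expPot α) x ≤ ρ ^ m * expPot α x + 2 / (1 - ρ) := by
  have h1 : 0 < 1 - ρ := by linarith
  -- The sharper constant is the partial geometric sum, which makes the induction close.
  have key : ∀ x : Fin N → ℕ, (stepOp q true)^[m] (expPot α) x
      ≤ ρ ^ m * expPot α x + 2 * (1 - ρ ^ m) / (1 - ρ) := by
    induction m with
    | zero => intro x; simp
    | succ m ih =>
      intro x
      rw [Function.iterate_succ_apply']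
      calc _ ≤ stepOp q true (fun y => ρ ^ m * expPot α y + 2 * (1 - ρ ^ m) / (1 - ρ)) x :=
            stepOp_mono hq0 hq1 true ih x
        _ = ρ ^ m * stepOp q true (expPot α) x + 2 * (1 - ρ ^ m) / (1 - ρ) :=
            stepOp_affine hN _ _ _ _ _ _
        _ ≤ ρ ^ m * (ρ * expPot α x + 2) + 2 * (1 - ρ ^ m) / (1 - ρ) := by gcongr; exact h x
        _ = _ := by field_simp; ring
  refine (key x).trans ?_
  gcongr
  have : 0 < ρ ^ m := by positivity
  linarith

lemma iterate_totalLoad {N : ℕ} [NeZero N] (hN : 2 ≤ N) (q : ℝ) (m : ℕ)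
    (x : Fin N → ℕ) :
    (stepOp q true)^[m] (fun y => (totalLoad y : ℝ)) x = totalLoad x + m := by
  induction m generalizing x with
  | zero => simp
  | succ m ih =>
    rw [Function.iterate_succ_apply']
    have : (stepOp q true)^[m] (fun y : Fin N → ℕ => (totalLoad y : ℝ))
        = fun y => (totalLoad y : ℝ) + m := funext ih
    rw [this]
    unfold stepOp
    simp_rw [totalLoad_greedyStep, ← Finset.sum_mul, sum_arrivalProb hN]
    push_cast
    ring

/-! ### The load chain -/

/-- Loads after `n` arrivals under a deterministic schedule `d` of flexing times. -/
noncomputable def chainLoad {N : ℕ} [NeZero N] (d : ℕ → Bool) :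
    (n : ℕ) → (Fin n → Arrival N) → Fin N → ℕ
  | 0, _ => fun _ => 0
  | n + 1, xs => greedyStep (d n) (xs (Fin.last n)) (chainLoad d n (Fin.init xs))

lemma greedyLoads_eq_chainLoad {N T : ℕ} [NeZero N] (d : ℕ → Bool)
    (xs : Fin T → Arrival N) (t : ℕ) (ht : t ≤ T) :
    greedyLoads (fun _ s _ => d s) xs t = chainLoad d t (fun i => xs (Fin.castLE ht i)) := by
  induction t with
  | zero => rfl
  | succ t ih =>
    rw [greedyLoads, dif_pos (by omega : t < T), ih (by omega)]
    rfl

lemma totalLoad_chainLoad {N : ℕ} [NeZero N] (d : ℕ → Bool) (n : ℕ)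
    (xs : Fin n → Arrival N) : totalLoad (chainLoad d n xs) = n := by
  induction n with
  | zero => simp [chainLoad, totalLoad]
  | succ n ih => rw [chainLoad, totalLoad_greedyStep, ih]

/-- Expectation of `g` at the loads after `n` arrivals. -/
noncomputable def chainExp {N : ℕ} [NeZero N] (q : ℝ) (d : ℕ → Bool) (n : ℕ)
    (g : (Fin N → ℕ) → ℝ) : ℝ :=
  expec N n q (fun xs => g (chainLoad d n xs))

lemma chainExp_zero {N : ℕ} [NeZero N] (q : ℝ) (d : ℕ → Bool) (g : (Fin N → ℕ) → ℝ) :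
    chainExp q d 0 g = g (fun _ => 0) := by
  simp [chainExp, expec, seqMass, chainLoad]

lemma chainExp_succ {N : ℕ} [NeZero N] (q : ℝ) (d : ℕ → Bool) (n : ℕ)
    (g : (Fin N → ℕ) → ℝ) :
    chainExp q d (n + 1) g = chainExp q d n (stepOp q (d n) g) := by
  unfold chainExp expec
  rw [← (Fin.snocEquiv (fun _ : Fin (n + 1) => Arrival N)).sum_comp, Fintype.sum_prod_type,
    Finset.sum_comm]
  refine Finset.sum_congr rfl fun xs _ => ?_
  unfold stepOp
  rw [Finset.mul_sum]
  refine Finset.sum_congr rfl fun a _ => ?_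
  have hinit : Fin.init ((Fin.snocEquiv (fun _ : Fin (n + 1) => Arrival N)) (a, xs)) = xs :=
    Fin.init_snoc (α := fun _ => Arrival N) a xs
  simp only [chainLoad, hinit]
  simp only [Fin.snocEquiv_apply, seqMass, Fin.prod_univ_castSucc, Fin.snoc_castSucc,
    Fin.snoc_last]
  ring

lemma chainExp_add {N : ℕ} [NeZero N] (q : ℝ) (d : ℕ → Bool) (s : ℕ)
    (hd : ∀ t, s ≤ t → d t = true) (m : ℕ) (g : (Fin N → ℕ) → ℝ) :
    chainExp q d (s + m) g = chainExp q d s ((stepOp q true)^[m] g) := by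
  induction m generalizing g with
  | zero => rfl
  | succ m ih =>
    rw [← add_assoc, chainExp_succ, hd _ (by omega), ih, Function.iterate_succ_apply]

/-- Only load vectors of total `n` are reachable after `n` arrivals. -/
lemma chainExp_mono {N : ℕ} [NeZero N] {q : ℝ} (hq0 : 0 < q) (hq1 : q ≤ 1) (d : ℕ → Bool)
    (n : ℕ) {g g' : (Fin N → ℕ) → ℝ} (h : ∀ x, totalLoad x = n → g x ≤ g' x) :
    chainExp q d n g ≤ chainExp q d n g' :=
  Finset.sum_le_sum fun xs _ => mul_le_mul_of_nonneg_left (h _ (totalLoad_chainLoad d n xs))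
    (Finset.prod_nonneg fun _ _ => arrivalProb_nonneg hq0 hq1 _)

lemma chainExp_affine {N : ℕ} [NeZero N] (hN : 2 ≤ N) (q : ℝ) (d : ℕ → Bool) (n : ℕ)
    (g : (Fin N → ℕ) → ℝ) (c e : ℝ) :
    chainExp q d n (fun x => c * g x + e) = c * chainExp q d n g + e := by
  induction n generalizing g with
  | zero => simp [chainExp_zero]
  | succ n ih =>
    rw [chainExp_succ, chainExp_succ, ← ih]
    congr 1
    funext x
    exact stepOp_affine hN q _ g c e x

lemma expPot_zero {N : ℕ} (α : ℝ) : expPot α (fun _ : Fin N => 0) = N := by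
  simp [expPot, dev, totalLoad]

lemma chainExp_expPot_le {N : ℕ} [NeZero N] (hN : 2 ≤ N) {q : ℝ} (hq0 : 0 < q) (hq1 : q ≤ 1)
    (d : ℕ → Bool) (n : ℕ) (hd : ∀ t < n, d t = false) {α : ℝ} (h0 : 0 ≤ α) (h1 : α ≤ 1) :
    chainExp q d n (expPot (N := N) α) ≤ Real.exp (n * α ^ 2) * N := by
  induction n with
  | zero => simp [chainExp_zero, expPot_zero]
  | succ n ih =>
    rw [chainExp_succ, hd n (by omega)]
    calc _ ≤ chainExp q d n (fun x : Fin N → ℕ => Real.exp (α ^ 2) * expPot α x + 0) :=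
          chainExp_mono hq0 hq1 d n fun x _ => by
            rw [add_zero]; exact stepOp_false_expPot_le hN q h0 h1 x
      _ = Real.exp (α ^ 2) * chainExp q d n (expPot (N := N) α) + 0 := chainExp_affine hN _ _ _ _ _ _
      _ ≤ Real.exp (α ^ 2) * (Real.exp (n * α ^ 2) * N) + 0 := by
          gcongr; exact ih fun t ht => hd t (by omega)
      _ = _ := by
          rw [add_zero, ← mul_assoc, ← Real.exp_add]; congr 2; push_cast; ring

/-! ### The gap -/

/-- The gap of a load vector, with the number of balls read off the loads. -/
noncomputable def ownGap {N : ℕ} (x : Fin N → ℕ) : ℝ := gap x (totalLoad x)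

lemma exists_ownGap_eq {N : ℕ} [NeZero N] (x : Fin N → ℕ) : ∃ i, ownGap x = dev x i := by
  obtain ⟨i, -, hi⟩ := Finset.exists_mem_eq_sup Finset.univ Finset.univ_nonempty x
  exact ⟨i, by simp [ownGap, gap, dev, maxLoad, hi]⟩

lemma dev_le_ownGap {N : ℕ} (x : Fin N → ℕ) (i : Fin N) : dev x i ≤ ownGap x := by
  have : x i ≤ maxLoad x := Finset.le_sup (Finset.mem_univ i)
  have : (x i : ℝ) ≤ maxLoad x := by exact_mod_cast this
  unfold dev ownGap gap
  linarith

lemma ownGap_le_totalLoad {N : ℕ} [NeZero N] (x : Fin N → ℕ) : ownGap x ≤ totalLoad x := by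
  obtain ⟨i, hi⟩ := exists_ownGap_eq x
  have h1 : x i ≤ totalLoad x := Finset.single_le_sum (f := x) (fun _ _ => Nat.zero_le _)
    (Finset.mem_univ i)
  have h2 : (x i : ℝ) ≤ totalLoad x := by exact_mod_cast h1
  have h3 : (0 : ℝ) ≤ (totalLoad x : ℝ) / N := by positivity
  rw [hi]
  unfold dev
  linarith

lemma exp_ownGap_le {N : ℕ} [NeZero N] (α : ℝ) (x : Fin N → ℕ) :
    Real.exp (α * ownGap x) ≤ expPot α x := by
  obtain ⟨i, hi⟩ := exists_ownGap_eq x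
  rw [hi]
  exact Finset.single_le_sum (f := fun i => Real.exp (α * dev x i))
    (fun _ _ => (Real.exp_pos _).le) (Finset.mem_univ i)

lemma expPot_le_exp_ownGap {N : ℕ} {α : ℝ} (h0 : 0 ≤ α) {h : ℝ} (x : Fin N → ℕ)
    (hx : ownGap x ≤ h) : expPot α x ≤ N * Real.exp (α * h) := by
  calc expPot α x ≤ ∑ _i : Fin N, Real.exp (α * h) := by
        refine Finset.sum_le_sum fun i _ => Real.exp_le_exp.2 ?_
        exact mul_le_mul_of_nonneg_left ((dev_le_ownGap x i).trans hx) h0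
    _ = _ := by simp

lemma ownGap_le_expPot_div {N : ℕ} [NeZero N] {α : ℝ} (h0 : 0 < α) (x : Fin N → ℕ) :
    ownGap x ≤ α⁻¹ * expPot α x := by
  have h1 := exp_ownGap_le α x
  have h2 := Real.add_one_le_exp (α * ownGap x)
  rw [inv_mul_eq_div, le_div_iff₀ h0]
  linarith

/-- Expected gap after `m` fully flexed steps from `x`, in terms of the initial potential. -/
lemma iterate_ownGap_le {N : ℕ} [NeZero N] (hN : 2 ≤ N) {q : ℝ} (hq0 : 0 < q)
    (hq1 : q ≤ 1) {α ρ : ℝ} (hα : 0 < α) (hρ0 : 0 < ρ) (hρ1 : ρ < 1)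
    (h : ∀ x : Fin N → ℕ, stepOp q true (expPot α) x ≤ ρ * expPot α x + 2) (m : ℕ)
    (x : Fin N → ℕ) :
    (stepOp q true)^[m] ownGap x ≤ α⁻¹ * (ρ ^ m * expPot α x + 2 / (1 - ρ)) := by
  have hs : ∀ m (x : Fin N → ℕ), (stepOp q true)^[m] (fun y => α⁻¹ * expPot α y) x
      = α⁻¹ * (stepOp q true)^[m] (expPot α) x := by
    intro m
    induction m with
    | zero => intro x; rfl
    | succ m ih =>
      intro x
      rw [Function.iterate_succ_apply', Function.iterate_succ_apply', funext ih]
      simpa using stepOp_affine hN q true ((stepOp q true)^[m] (expPot α)) α⁻¹ 0 x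
  refine (stepOp_iterate_mono hq0 hq1 true (ownGap_le_expPot_div hα) m x).trans ?_
  rw [hs]
  exact mul_le_mul_of_nonneg_left (iterate_expPot_le hN hq0 hq1 hρ0 hρ1 h m x) (by positivity)

/-- **Theorem 1** (static policy achieves constant expected gap): the static policy,
which flexes exactly when `t ≥ T - a_s √(T log T)` with `a_s = 2√6 N(N-1)/q`, has
`E[Gap(T)] ≤ C` for a constant `C` depending only on `N` and `q`. -/
theorem static_gap_bound (N : ℕ) [NeZero N] (hN : 2 ≤ N) (q : ℝ)
    (hq0 : 0 < q) (hq1 : q ≤ 1) :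
    ∃ C : ℝ, ∀ T : ℕ,
      expec N T q (fun xs =>
        gap (greedyLoads (lateDec N T (2 * Real.sqrt 6 * (N : ℝ) * ((N : ℝ) - 1) / q)) xs T)
          T) ≤ C := by
  have hN2 : (2 : ℝ) ≤ N := by exact_mod_cast hN
  have hN1 : 0 < (N : ℝ) - 1 := by linarith
  have hNp : (0 : ℝ) < N := by linarith
  obtain ⟨δ, hδ⟩ : ∃ δ : ℝ, δ = q / (N * ((N : ℝ) - 1)) := ⟨_, rfl⟩
  obtain ⟨α, hα⟩ : ∃ α : ℝ, α = δ * N / 2 := ⟨_, rfl⟩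
  have hδ0 : 0 < δ := by rw [hδ]; positivity
  have hα0 : 0 < α := by rw [hα]; positivity
  obtain ⟨ρ, hρ⟩ : ∃ ρ : ℝ, ρ = Real.exp (-(α * δ / 2)) := ⟨_, rfl⟩
  have hρ0 : 0 < ρ := by rw [hρ]; exact Real.exp_pos _
  have hρ1 : ρ < 1 := by
    rw [hρ, Real.exp_lt_one_iff]
    have : 0 < α * δ := by positivity
    linarith
  have hstep : ∀ x : Fin N → ℕ, stepOp q true (expPot α) x ≤ ρ * expPot α x + 2 := by
    rw [hρ]; exact stepOp_true_expPot_le hN hq0 hq1 hδ hα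
  have hB : 0 ≤ 2 / (1 - ρ) := div_nonneg (by norm_num) (by linarith)
  refine ⟨α⁻¹ * (N + 2 / (1 - ρ)) + N, fun T => ?_⟩
  set r := Real.sqrt ((T : ℝ) * Real.log T) with hr
  have hr0 : 0 ≤ r := Real.sqrt_nonneg _
  set c := 2 * Real.sqrt 6 * (N : ℝ) * ((N : ℝ) - 1) / q with hc
  have hcδ : c * δ = 2 * Real.sqrt 6 := by rw [hc, hδ]; field_simp
  have hc0 : 0 ≤ c := by rw [hc]; positivity
  have hcr : 0 ≤ c * r := mul_nonneg hc0 hr0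
  -- `s` is the number of steps before flexing starts.
  set s := ⌈(T : ℝ) - c * r - 1⌉₊ with hs
  set d : ℕ → Bool := fun t => if (T : ℝ) - c * r ≤ (t : ℝ) + 1 then true else false with hd
  have hd1 : ∀ t, s ≤ t → d t = true := by
    intro t ht
    have := Nat.ceil_le.1 ht
    simp only [hd]
    rw [if_pos (by linarith)]
  have hd2 : ∀ t < s, d t = false := by
    intro t ht
    have := Nat.lt_ceil.1 ht
    simp only [hd]
    rw [if_neg (by linarith)]
  have hsT : s ≤ T := Nat.ceil_le.2 (by linarith)
  have hE : expec N T q (fun xs => gap (greedyLoads (lateDec N T c) xs T) T)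
      = chainExp q d T (ownGap (N := N)) := by
    unfold chainExp
    congr 1
    funext xs
    have : greedyLoads (lateDec N T c) xs T = chainLoad d T xs :=
      greedyLoads_eq_chainLoad d xs T le_rfl
    rw [this, ownGap, totalLoad_chainLoad]
  rw [hE]
  obtain ⟨m, hT⟩ := Nat.exists_eq_add_of_le hsT
  have hsplit := chainExp_add q d s hd1 m (ownGap (N := N))
  rw [← hT] at hsplit
  rw [hsplit]
  have hV := fun x => iterate_ownGap_le hN hq0 hq1 hα0 hρ0 hρ1 hstep m x
  have hconst : ∀ x : Fin N → ℕ, ρ ^ m * expPot α x ≤ N →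
      (stepOp q true)^[m] ownGap x ≤ α⁻¹ * (N + 2 / (1 - ρ)) := by
    intro x hx
    refine (hV x).trans (mul_le_mul_of_nonneg_left (by linarith) (by positivity))
  rcases Nat.eq_zero_or_pos s with h0 | hpos
  · -- Every step is flexed, starting from the balanced state.
    rw [h0, chainExp_zero]
    refine (hconst _ ?_).trans (by linarith)
    rw [expPot_zero]
    exact mul_le_of_le_one_left hNp.le (pow_le_one₀ hρ0.le hρ1.le)
  · have hTr : (T : ℝ) = s + m := by exact_mod_cast hT
    have hT1 : (1 : ℝ) ≤ T := by exact_mod_cast (by omega : 1 ≤ T)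
    have hlog : 0 ≤ Real.log T := Real.log_nonneg hT1
    have hlogT : Real.log T ≤ T := (Real.log_le_sub_one_of_pos (by linarith)).trans (by linarith)
    have hm : c * r ≤ m := by
      have h1 := Nat.ceil_lt_add_one (a := (T : ℝ) - c * r - 1) (by
        have := Nat.ceil_pos.1 hpos; linarith)
      rw [← hs] at h1
      linarith
    -- `h` is the deviation threshold at time `s`, `lam` the Chernoff parameter.
    set h := Real.sqrt 6 * r with hh
    set lam := Real.sqrt (Real.log T / T) with hlam
    have hlam0 : 0 ≤ lam := Real.sqrt_nonneg _
    have hlam1 : lam ≤ 1 := Real.sqrt_le_one.2 (by rw [div_le_one (by linarith)]; exact hlogT)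
    have hlam2 : lam ^ 2 * T = Real.log T := by
      rw [hlam, Real.sq_sqrt (by positivity)]; field_simp
    have hlamr : lam * r = Real.log T := by
      rw [hlam, hr, ← Real.sqrt_mul (by positivity)]
      rw [show Real.log T / T * (T * Real.log T) = Real.log T ^ 2 by field_simp]
      exact Real.sqrt_sq hlog
    have hρm : ρ ^ m * Real.exp (α * h) ≤ 1 := by
      rw [hρ, ← Real.exp_nat_mul, ← Real.exp_add, Real.exp_le_one_iff]
      have h1 : α * δ / 2 * (c * r) ≤ α * δ / 2 * m :=
        mul_le_mul_of_nonneg_left hm (by positivity)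
      have h2 : α * δ / 2 * (c * r) = α * h := by
        rw [hh]; linear_combination (α * r / 2) * hcδ
      linarith
    have hpt : ∀ x : Fin N → ℕ, totalLoad x = s → (stepOp q true)^[m] ownGap x
        ≤ (T * Real.exp (-(lam * h))) * expPot lam x + α⁻¹ * (N + 2 / (1 - ρ)) := by
      intro x hx
      by_cases hg : ownGap x ≤ h
      · have h1 : 0 ≤ (T * Real.exp (-(lam * h))) * expPot lam x :=
          mul_nonneg (by positivity) (expPot_nonneg _ _)
        have h2 := hconst x (by
          calc ρ ^ m * expPot α x ≤ ρ ^ m * (N * Real.exp (α * h)) := by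
                gcongr; exact expPot_le_exp_ownGap hα0.le x hg
            _ = N * (ρ ^ m * Real.exp (α * h)) := by ring
            _ ≤ N * 1 := by gcongr
            _ = N := mul_one _)
        linarith
      · have h1 : Real.exp (lam * h) ≤ expPot lam x :=
          (Real.exp_le_exp.2 (mul_le_mul_of_nonneg_left (le_of_not_ge hg) hlam0)).trans
            (exp_ownGap_le lam x)
        have h2 : (stepOp q true)^[m] ownGap x ≤ T := by
          refine (stepOp_iterate_mono hq0 hq1 true ownGap_le_totalLoad m x).trans ?_
          rw [iterate_totalLoad hN, hx]
          exact hTr.ge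
        have h3 : (T : ℝ) ≤ (T * Real.exp (-(lam * h))) * expPot lam x := by
          calc (T : ℝ) = (T * Real.exp (-(lam * h))) * Real.exp (lam * h) := by
                rw [mul_assoc, ← Real.exp_add]; simp
            _ ≤ _ := by gcongr
        have h4 : 0 ≤ α⁻¹ * (N + 2 / (1 - ρ)) := by positivity
        linarith
    have hpot := chainExp_expPot_le hN hq0 hq1 d s hd2 hlam0 hlam1
    -- The exponents add up to `(2 - √6) log T ≤ 0`.
    have hfin : T * Real.exp (-(lam * h)) * (Real.exp (s * lam ^ 2) * N) ≤ N := by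
      have h6 : (2 : ℝ) ≤ Real.sqrt 6 := Real.le_sqrt_of_sq_le (by norm_num)
      have e1 : (T : ℝ) = Real.exp (Real.log T) := (Real.exp_log (by linarith)).symm
      have hsT' : (s : ℝ) ≤ T := by exact_mod_cast hsT
      have e2 : Real.exp (Real.log T) * Real.exp (-(lam * h)) * Real.exp (s * lam ^ 2) ≤ 1 := by
        rw [← Real.exp_add, ← Real.exp_add, Real.exp_le_one_iff]
        have h7 : lam * h = Real.sqrt 6 * Real.log T := by rw [hh, ← hlamr]; ring
        have h8 : s * lam ^ 2 ≤ Real.log T := by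
          rw [← hlam2]; nlinarith [sq_nonneg lam]
        nlinarith
      rw [← e1] at e2
      calc _ = T * Real.exp (-(lam * h)) * Real.exp (s * lam ^ 2) * N := by ring
        _ ≤ 1 * N := by gcongr
        _ = N := one_mul _
    calc _ ≤ chainExp q d s (fun x : Fin N → ℕ =>
          (T * Real.exp (-(lam * h))) * expPot lam x + α⁻¹ * (N + 2 / (1 - ρ))) :=
          chainExp_mono hq0 hq1 d s hpt
      _ = (T * Real.exp (-(lam * h))) * chainExp q d s (expPot (N := N) lam)
          + α⁻¹ * (N + 2 / (1 - ρ)) := chainExp_affine hN _ _ _ _ _ _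
      _ ≤ (T * Real.exp (-(lam * h))) * (Real.exp (s * lam ^ 2) * N)
          + α⁻¹ * (N + 2 / (1 - ρ)) := by gcongr
      _ ≤ _ := by linarith
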